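/- Let p : [0,∞) → [0,1] be continuous with p(0)=1, γ > 1/G_∞, and let λ = p̂^{-1}(1/γ) > 0. Suppose Z : [0,∞) → [1,∞) is nondecreasing and satisfies Z(t) = 1 + γ ∫₀^t Z(t−s) p(s) ds. Then e^{-λt} Z(t) → 1/(λ γ ∫₀^∞ s e^{-λs} p(s) ds) as t → ∞. -/

import Mathlib

open MeasureTheory Set Real Filter

open scoped Topology

/-!
Tilting by `exp (-l * t)` turns the equation into a renewal equation `v = e + v * F` on the line,
where `F` is the probability law `γ * exp (-l * s) * p s ds`. Integrating it over `(-∞, t]` gives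
`∫ (∫ x in (t - s)..t, v x) dF(s) = ∫ x in (-∞, t], e x`, so `v` should tend to `(∫ e) / ∫ s dF`.

Let `C = limsup v` and let `v (t n) → C`. Since `v (t n)` is up to `e (t n)` the `F`-average of
the values `v (t n - s)`, and these cannot exceed `C` in the limit, they tend to `C` for every `s`
near which `F` has enough mass. The argument can be repeated along `t n - s`, hence applies to the
semigroup generated by such `s`, and so to all large `s` when `F` charges an interval. Passing to
the limit in the integrated equation gives `C * ∫ s dF = ∫ e`. The same holds for the liminf, so
the two agree. No continuity of `v` is needed: a tilted monotone function cannot decrease quickly,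
and this one-sided control suffices for both the limsup and the liminf.
-/

theorem exists_Ici_subset_closure_Ioo {a b : ℝ} (ha : 0 ≤ a) (hab : a < b) :
    ∃ N, Ici N ⊆ (AddSubmonoid.closure (Ioo a b) : Set ℝ) := by
  obtain ⟨m, ham, hmb⟩ := exists_between hab
  have hm : 0 < m := ha.trans_lt ham
  refine ⟨a * m / (m - a) + 1, fun s hs => ?_⟩
  have hlarge : a * m / (m - a) < s := by linarith [mem_Ici.1 hs]
  have hs0 : 0 < s := lt_of_le_of_lt (div_nonneg (by positivity) (by linarith)) hlarge
  rw [div_lt_iff₀ (by linarith)] at hlarge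
  have hk : 0 < ⌈s / m⌉₊ := Nat.ceil_pos.2 (by positivity)
  have hk_lower : s / m ≤ ⌈s / m⌉₊ := Nat.le_ceil _
  have hk_upper : (⌈s / m⌉₊ : ℝ) < s / m + 1 := Nat.ceil_lt_add_one (by positivity)
  set k := ⌈s / m⌉₊
  have hk0 : (0 : ℝ) < k := by exact_mod_cast hk
  have hmem : s / k ∈ Ioo a b := by
    rw [div_le_iff₀ hm] at hk_lower
    rw [← sub_lt_iff_lt_add, lt_div_iff₀ hm] at hk_upper
    constructor
    · rw [lt_div_iff₀ hk0]
      nlinarith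
    · rw [div_lt_iff₀ hk0]
      nlinarith
  have hsum : k • (s / k) = s := by rw [nsmul_eq_mul, mul_div_cancel₀ _ hk0.ne']
  exact hsum ▸ nsmul_mem (AddSubmonoid.subset_closure hmem) k

/-! ### Renewal equations on the line -/

theorem integrableOn_Iic_comp_sub {v : ℝ → ℝ} {t s : ℝ} (hv : IntegrableOn v (Iic (t - s))) :
    IntegrableOn (fun x => v (x - s)) (Iic t) := by
  have := ((measurePreserving_sub_right volume s).integrableOn_comp_preimage
    (measurableEmbedding_subRight s)).2 hv
  rwa [preimage_sub_const_Iic, sub_add_cancel] at this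

theorem setIntegral_Iic_comp_sub (v : ℝ → ℝ) (t s : ℝ) :
    ∫ x in Iic t, v (x - s) = ∫ x in Iic (t - s), v x := by
  rw [← (measurePreserving_sub_right volume s).setIntegral_preimage_emb
    (measurableEmbedding_subRight s) v, preimage_sub_const_Iic, sub_add_cancel]

theorem integrable_comp_sub_prod {F : Measure ℝ} [IsFiniteMeasure F] (hF : ∀ᵐ s ∂F, 0 ≤ s)
    {v : ℝ → ℝ} (hvm : Measurable v) {t : ℝ} (hv : IntegrableOn v (Iic t)) :
    Integrable (fun z : ℝ × ℝ => v (z.1 - z.2)) ((volume.restrict (Iic t)).prod F) := by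
  have hm : AEStronglyMeasurable (fun z : ℝ × ℝ => v (z.1 - z.2))
      ((volume.restrict (Iic t)).prod F) := (by fun_prop : Measurable _).aestronglyMeasurable
  have hsub : ∀ s, 0 ≤ s → Iic (t - s) ⊆ Iic t := fun s hs => Iic_subset_Iic.2 (by linarith)
  refine (integrable_prod_iff' hm).2 ⟨?_, ?_⟩
  · filter_upwards [hF] with s hs
    exact integrableOn_Iic_comp_sub (hv.mono_set (hsub s hs))
  · refine Integrable.of_bound hm.norm.prod_swap.integral_prod_right' (∫ x in Iic t, ‖v x‖) ?_
    filter_upwards [hF] with s hs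
    rw [norm_of_nonneg (integral_nonneg fun _ => norm_nonneg _)]
    refine (setIntegral_Iic_comp_sub (fun x => ‖v x‖) t s).trans_le ?_
    exact setIntegral_mono_set hv.norm (ae_of_all _ fun _ => norm_nonneg _) (hsub s hs).eventuallyLE

/-- `v` solves the renewal equation `v = e + v * F`. The equation is imposed on all of `ℝ`; an
equation on `[0, ∞)` is encoded by extending `v` and `e` by zero. -/
structure IsRenewalSolution (F : Measure ℝ) (e v : ℝ → ℝ) : Prop where
  measurable : Measurable v
  integrableOn_Iic : ∀ t, IntegrableOn v (Iic t)
  eq_add_integral : ∀ t, v t = e t + ∫ s, v (t - s) ∂F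

namespace IsRenewalSolution

variable {F : Measure ℝ} {e v : ℝ → ℝ}

theorem neg (h : IsRenewalSolution F e v) : IsRenewalSolution F (-e) (-v) where
  measurable := h.measurable.neg
  integrableOn_Iic t := (h.integrableOn_Iic t).neg
  eq_add_integral t := by
    simp only [Pi.neg_apply, integral_neg]
    rw [h.eq_add_integral t, neg_add]

theorem intervalIntegral_eq_sub (h : IsRenewalSolution F e v) (t s : ℝ) :
    ∫ x in (t - s)..t, v x = (∫ x in Iic t, v x) - ∫ x in Iic t, v (x - s) := by
  rw [setIntegral_Iic_comp_sub,
    intervalIntegral.integral_Iic_sub_Iic (h.integrableOn_Iic _) (h.integrableOn_Iic _)]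

theorem integrable_comp_sub [IsFiniteMeasure F] (h : IsRenewalSolution F e v) {B : ℝ}
    (hB : ∀ x, |v x| ≤ B) (t : ℝ) :
    Integrable (fun s => v (t - s)) F :=
  .of_bound (h.measurable.comp (measurable_const.sub measurable_id)).aestronglyMeasurable B
    (ae_of_all _ fun _ => hB _)

theorem integrable_intervalIntegral [IsFiniteMeasure F] (h : IsRenewalSolution F e v)
    (hF : ∀ᵐ s ∂F, 0 ≤ s) (t : ℝ) :
    Integrable (fun s => ∫ x in (t - s)..t, v x) F := by
  simp only [h.intervalIntegral_eq_sub]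
  exact (integrable_const _).sub
    (integrable_comp_sub_prod hF h.measurable (h.integrableOn_Iic t)).integral_prod_right

theorem integral_intervalIntegral [IsProbabilityMeasure F] (h : IsRenewalSolution F e v)
    (hF : ∀ᵐ s ∂F, 0 ≤ s) (t : ℝ) :
    ∫ s, (∫ x in (t - s)..t, v x) ∂F = ∫ x in Iic t, e x := by
  have hint := integrable_comp_sub_prod hF h.measurable (h.integrableOn_Iic t)
  calc ∫ s, (∫ x in (t - s)..t, v x) ∂F
      = (∫ x in Iic t, v x) - ∫ s, (∫ x in Iic t, v (x - s)) ∂F := by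
        simp only [h.intervalIntegral_eq_sub]
        rw [integral_sub (integrable_const _) hint.integral_prod_right, integral_const,
          probReal_univ, one_smul]
    _ = (∫ x in Iic t, v x) - ∫ x in Iic t, (∫ s, v (x - s) ∂F) := by
        rw [integral_integral_swap (f := fun x s => v (x - s)) hint]
    _ = ∫ x in Iic t, (v x - ∫ s, v (x - s) ∂F) :=
        (integral_sub (h.integrableOn_Iic t) hint.integral_prod_left).symm
    _ = ∫ x in Iic t, e x := by
        simp only [sub_eq_iff_eq_add.2 (h.eq_add_integral _)]

end IsRenewalSolution

/-! ### The key renewal theorem -/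

/-- The shift `s` is admissible for `v` under jumps of law `F`: with positive probability a jump
`r` is such that the translate of `v` by `r` exceeds the translate by `s` by at most `ε`. -/
def IsAdmissibleShift (F : Measure ℝ) (v : ℝ → ℝ) (s : ℝ) : Prop :=
  ∀ ε > 0, 0 < F {r | ∀ x, v (x - r) ≤ v (x - s) + ε}

namespace IsRenewalSolution

variable {F : Measure ℝ} [IsProbabilityMeasure F] {e v : ℝ → ℝ} {B C : ℝ} {t : ℕ → ℝ}

/- Where `v` is close to its limsup `C`, the renewal equation makes the `F`-average of
`v (t n - s)` close to `C`, while the excess of `v (t n - s)` over `C` vanishes in the limit. -/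
theorem tendsto_integral_max_sub (h : IsRenewalSolution F e v) (hB : ∀ x, |v x| ≤ B)
    (he : Tendsto e atTop (𝓝 0)) (hC : ∀ c > C, ∀ᶠ x in atTop, v x < c)
    (ht : Tendsto t atTop atTop) (htC : Tendsto (fun n => v (t n)) atTop (𝓝 C)) :
    Tendsto (fun n => ∫ s, (max (v (t n - s)) C - v (t n - s)) ∂F) atTop (𝓝 0) := by
  have hint : ∀ n, Integrable (fun s => v (t n - s)) F := fun n => h.integrable_comp_sub hB _
  have hint_max : ∀ n, Integrable (fun s => max (v (t n - s)) C) F := fun n =>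
    (hint n).sup (integrable_const C)
  have hpointwise : ∀ s, Tendsto (fun n => max (v (t n - s)) C) atTop (𝓝 C) := fun s =>
    tendsto_order.2 ⟨fun c hc => Eventually.of_forall fun n => lt_max_of_lt_right hc, fun c hc =>
      ((tendsto_atTop_add_const_right _ (-s) ht).eventually (hC c hc)).mono fun n hn =>
        max_lt hn hc⟩
  have hmax : Tendsto (fun n => ∫ s, max (v (t n - s)) C ∂F) atTop (𝓝 (∫ _, C ∂F)) :=
    tendsto_integral_of_dominated_convergence (fun _ => max B |C|)
      (fun n => (hint_max n).aestronglyMeasurable) (integrable_const _)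
      (fun n => ae_of_all _ fun s => abs_max_le_max_abs_abs.trans (max_le_max_right _ (hB _)))
      (ae_of_all _ hpointwise)
  have hlim := hmax.sub (htC.sub (he.comp ht))
  rw [integral_const, probReal_univ, one_smul, sub_zero, sub_self] at hlim
  refine hlim.congr fun n => ?_
  rw [integral_sub (hint_max n) (hint n), h.eq_add_integral (t n), Function.comp_apply,
    add_sub_cancel_left]

theorem tendsto_comp_sub (h : IsRenewalSolution F e v) (hB : ∀ x, |v x| ≤ B)
    (he : Tendsto e atTop (𝓝 0)) (hC : ∀ c > C, ∀ᶠ x in atTop, v x < c)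
    (ht : Tendsto t atTop atTop) (htC : Tendsto (fun n => v (t n)) atTop (𝓝 C))
    {s : ℝ} (hs : IsAdmissibleShift F v s) :
    Tendsto (fun n => v (t n - s)) atTop (𝓝 C) := by
  refine tendsto_order.2 ⟨fun c hc => ?_, fun c hc =>
    (tendsto_atTop_add_const_right _ (-s) ht).eventually (hC c hc)⟩
  set ε := (C - c) / 2
  have hε : 0 < ε := half_pos (sub_pos.2 hc)
  set U := {r | ∀ x, v (x - r) ≤ v (x - s) + ε}
  have hU : 0 < F.real U := ENNReal.toReal_pos (hs ε hε).ne' (measure_ne_top _ _)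
  filter_upwards [(h.tendsto_integral_max_sub hB he hC ht htC).eventually
    (gt_mem_nhds (mul_pos hε hU))] with n hn
  by_contra! hle
  have hsub : U ⊆ {r | ε ≤ max (v (t n - r)) C - v (t n - r)} := fun r hr => by
    have := hr (t n)
    have := le_max_right (v (t n - r)) C
    rw [mem_ofPred_eq]
    linarith [show ε = (C - c) / 2 from rfl]
  have hint := h.integrable_comp_sub hB (t n)
  refine hn.not_ge ?_
  calc ε * F.real U ≤ ε * F.real {r | ε ≤ max (v (t n - r)) C - v (t n - r)} :=
        mul_le_mul_of_nonneg_left (measureReal_mono hsub) hε.le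
    _ ≤ ∫ r, (max (v (t n - r)) C - v (t n - r)) ∂F :=
        mul_meas_ge_le_integral_of_nonneg
          (ae_of_all _ fun r => sub_nonneg.2 (le_max_left _ _))
          ((hint.sup (integrable_const C)).sub hint) ε

theorem tendsto_comp_sub_of_mem_closure (h : IsRenewalSolution F e v) (hB : ∀ x, |v x| ≤ B)
    (he : Tendsto e atTop (𝓝 0)) (hC : ∀ c > C, ∀ᶠ x in atTop, v x < c)
    (ht : Tendsto t atTop atTop) (htC : Tendsto (fun n => v (t n)) atTop (𝓝 C))
    {s : ℝ} (hs : s ∈ AddSubmonoid.closure {r | IsAdmissibleShift F v r}) :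
    Tendsto (fun n => v (t n - s)) atTop (𝓝 C) := by
  induction hs using AddSubmonoid.closure_induction generalizing t with
  | mem r hr => exact h.tendsto_comp_sub hB he hC ht htC hr
  | zero => simpa only [sub_zero] using htC
  | add r s _ _ ihr ihs =>
    simpa only [← sub_eq_add_neg, sub_sub] using
      ihs (tendsto_atTop_add_const_right _ (-r) ht) (ihr ht htC)

end IsRenewalSolution

theorem intervalIntegrable_of_bounded {v : ℝ → ℝ} {B : ℝ} (hvm : Measurable v)
    (hB : ∀ x, |v x| ≤ B) (a b : ℝ) : IntervalIntegrable v volume a b :=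
  (intervalIntegrable_const (c := B)).mono_fun' hvm.aestronglyMeasurable (ae_of_all _ hB)

theorem tendsto_intervalIntegral_of_tendsto_comp_sub {v : ℝ → ℝ} {B C : ℝ} {t : ℕ → ℝ}
    (hvm : Measurable v) (hB : ∀ x, |v x| ≤ B)
    (htC : ∀ r, 0 ≤ r → Tendsto (fun n => v (t n - r)) atTop (𝓝 C)) {s : ℝ} (hs : 0 ≤ s) :
    Tendsto (fun n => ∫ x in (t n - s)..t n, v x) atTop (𝓝 (C * s)) := by
  have hlim : Tendsto (fun n => ∫ r in (0 : ℝ)..s, v (t n - r)) atTop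
      (𝓝 (∫ _ in (0 : ℝ)..s, C)) :=
    intervalIntegral.tendsto_integral_filter_of_dominated_convergence (fun _ => B)
      (Eventually.of_forall fun n =>
        (hvm.comp (measurable_const.sub measurable_id)).aestronglyMeasurable)
      (Eventually.of_forall fun n => ae_of_all _ fun r _ => hB _) intervalIntegrable_const
      (ae_of_all _ fun r hr => htC r (by rw [uIoc_of_le hs] at hr; exact hr.1.le))
  simpa only [intervalIntegral.integral_comp_sub_left, sub_zero, intervalIntegral.integral_const,
    smul_eq_mul, mul_comm C] using hlim

theorem tendsto_integral_intervalIntegral {F : Measure ℝ} {v : ℝ → ℝ} {B C : ℝ} {t : ℕ → ℝ}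
    (hF : ∀ᵐ s ∂F, 0 ≤ s) (hmean : Integrable id F) (hvm : Measurable v) (hB : ∀ x, |v x| ≤ B)
    (htC : ∀ s, 0 ≤ s → Tendsto (fun n => v (t n - s)) atTop (𝓝 C)) :
    Tendsto (fun n => ∫ s, (∫ x in (t n - s)..t n, v x) ∂F) atTop (𝓝 (C * ∫ s, s ∂F)) := by
  rw [← integral_const_mul]
  refine tendsto_integral_of_dominated_convergence (fun s => B * |s|) (fun n => ?_)
    (hmean.abs.const_mul B) (fun n => ae_of_all _ fun s => ?_) ?_
  · have hprim := intervalIntegral.continuous_primitive (intervalIntegrable_of_bounded hvm hB) (t n)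
    simp only [intervalIntegral.integral_symm (t n)]
    exact (hprim.comp (continuous_const.sub continuous_id)).neg.aestronglyMeasurable
  · simpa only [sub_sub_cancel] using
      intervalIntegral.norm_integral_le_of_norm_le_const (a := t n - s) (b := t n)
        fun x _ => hB x
  · filter_upwards [hF] with s hs
    exact tendsto_intervalIntegral_of_tendsto_comp_sub hvm hB htC hs

namespace IsRenewalSolution

variable {F : Measure ℝ} [IsProbabilityMeasure F] {e v : ℝ → ℝ} {B C N : ℝ} {t : ℕ → ℝ}

theorem mul_mean_eq_integral (h : IsRenewalSolution F e v) (hF : ∀ᵐ s ∂F, 0 ≤ s)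
    (hmean : Integrable id F) (hB : ∀ x, |v x| ≤ B) (he : Integrable e)
    (he0 : Tendsto e atTop (𝓝 0))
    (hN : Ici N ⊆ (AddSubmonoid.closure {r | IsAdmissibleShift F v r} : Set ℝ))
    (hC : ∀ c > C, ∀ᶠ x in atTop, v x < c)
    (ht : Tendsto t atTop atTop) (htC : Tendsto (fun n => v (t n)) atTop (𝓝 C)) :
    C * ∫ s, s ∂F = ∫ x, e x := by
  have hshift : ∀ s, 0 ≤ s → Tendsto (fun n => v (t n - N - s)) atTop (𝓝 C) := fun s hs => by
    simpa only [sub_sub] using h.tendsto_comp_sub_of_mem_closure hB he0 hC ht htC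
      (hN (mem_Ici.2 (le_add_of_nonneg_right hs)))
  have hlim := tendsto_integral_intervalIntegral hF hmean h.measurable hB hshift
  simp only [h.integral_intervalIntegral hF] at hlim
  exact tendsto_nhds_unique hlim ((aecover_Iic
    (tendsto_atTop_add_const_right _ (-N) ht)).integral_tendsto_of_countably_generated he)

theorem tendsto_integral_div_mean (h : IsRenewalSolution F e v) (hF : ∀ᵐ s ∂F, 0 ≤ s)
    (hmean : Integrable id F) (hmean0 : ∫ s, s ∂F ≠ 0) (hB : ∀ x, |v x| ≤ B) (he : Integrable e)
    (he0 : Tendsto e atTop (𝓝 0))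
    (hv : ∃ N, Ici N ⊆ (AddSubmonoid.closure {r | IsAdmissibleShift F v r} : Set ℝ))
    (hv_neg : ∃ N, Ici N ⊆ (AddSubmonoid.closure {r | IsAdmissibleShift F (-v) r} : Set ℝ)) :
    Tendsto v atTop (𝓝 ((∫ x, e x) / ∫ s, s ∂F)) := by
  obtain ⟨N, hN⟩ := hv
  obtain ⟨N', hN'⟩ := hv_neg
  have hle : IsBoundedUnder (· ≤ ·) atTop v := isBoundedUnder_of ⟨B, fun x => (abs_le.1 (hB x)).2⟩
  have hge : IsBoundedUnder (· ≥ ·) atTop v := isBoundedUnder_of ⟨-B, fun x => (abs_le.1 (hB x)).1⟩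
  obtain ⟨t, htC, ht⟩ := exists_seq_tendsto_limsup hge.isCoboundedUnder_le hle
  obtain ⟨t', htC', ht'⟩ := exists_seq_tendsto_liminf hle.isCoboundedUnder_ge hge
  have hsup : limsup v atTop * ∫ s, s ∂F = ∫ x, e x :=
    h.mul_mean_eq_integral hF hmean hB he he0 hN
      (fun c hc => eventually_lt_of_limsup_lt hc hle) ht htC
  have hinf : -liminf v atTop * ∫ s, s ∂F = ∫ x, (-e) x :=
    h.neg.mul_mean_eq_integral hF hmean (fun x => (abs_neg (v x)).trans_le (hB x)) he.neg
      (neg_zero (G := ℝ) ▸ he0.neg) hN'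
      (fun c hc => (eventually_lt_of_lt_liminf (neg_lt.1 hc) hge).mono fun x hx => neg_lt.1 hx)
      ht' htC'.neg
  simp only [Pi.neg_apply, integral_neg, neg_mul, neg_inj] at hinf
  exact tendsto_of_liminf_eq_limsup (eq_div_of_mul_eq hmean0 hinf) (eq_div_of_mul_eq hmean0 hsup)
    hle hge

end IsRenewalSolution

/-- Uniform form of Schmidt's Tauberian condition: `v` drops by at most `ε` over short intervals.
It replaces continuity of `v` and holds for bounded exponential tilts of monotone functions. -/
def IsSlowlyDecreasing (v : ℝ → ℝ) : Prop :=
  ∀ ε > 0, ∃ δ > 0, ∀ x y, x ≤ y → y ≤ x + δ → v x ≤ v y + ε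

/-- `F` charges every nonempty open subinterval of `(a, b)`. -/
def ChargesSubintervals (F : Measure ℝ) (a b : ℝ) : Prop :=
  ∀ c d, a ≤ c → c < d → d ≤ b → 0 < F (Ioo c d)

namespace IsSlowlyDecreasing

variable {F : Measure ℝ} {v : ℝ → ℝ} {a b s : ℝ}

theorem isAdmissibleShift (hv : IsSlowlyDecreasing v) (hF : ChargesSubintervals F a b)
    (hs : s ∈ Ioo a b) : IsAdmissibleShift F v s := fun ε hε => by
  obtain ⟨δ, hδ, hvδ⟩ := hv ε hε
  refine (hF s (min b (s + δ)) hs.1.le (lt_min hs.2 (lt_add_of_pos_right s hδ))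
    (min_le_left _ _)).trans_le (measure_mono fun r hr x => hvδ _ _ ?_ ?_)
  · linarith [hr.1]
  · linarith [(lt_min_iff.1 hr.2).2]

theorem isAdmissibleShift_neg (hv : IsSlowlyDecreasing v) (hF : ChargesSubintervals F a b)
    (hs : s ∈ Ioo a b) : IsAdmissibleShift F (-v) s := fun ε hε => by
  obtain ⟨δ, hδ, hvδ⟩ := hv ε hε
  refine (hF (max a (s - δ)) s (le_max_left _ _) (max_lt hs.1 (sub_lt_self s hδ))
    hs.2.le).trans_le (measure_mono fun r hr x => ?_)
  have := hvδ (x - s) (x - r) (by linarith [hr.2]) (by linarith [(max_lt_iff.1 hr.1).2])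
  simp only [Pi.neg_apply]
  linarith

end IsSlowlyDecreasing

theorem ChargesSubintervals.mean_pos {F : Measure ℝ} {a b : ℝ} (hF : ChargesSubintervals F a b)
    (ha : 0 ≤ a) (hab : a < b) (hF0 : ∀ᵐ s ∂F, 0 ≤ s) (hmean : Integrable id F) :
    0 < ∫ s, s ∂F := by
  refine (integral_pos_iff_support_of_nonneg_ae hF0 hmean).2 ?_
  exact (hF a b le_rfl hab le_rfl).trans_le
    (measure_mono fun s hs => (ha.trans_lt hs.1).ne')

/-- The key renewal theorem: the Tauberian condition on the solution takes the place of direct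
Riemann integrability of the forcing term, and the charged interval that of non-arithmeticity. -/
theorem IsRenewalSolution.tendsto_of_isSlowlyDecreasing {F : Measure ℝ} [IsProbabilityMeasure F]
    {e v : ℝ → ℝ} {a b B : ℝ} (h : IsRenewalSolution F e v) (hF0 : ∀ᵐ s ∂F, 0 ≤ s)
    (hmean : Integrable id F) (ha : 0 ≤ a) (hab : a < b) (hF : ChargesSubintervals F a b)
    (hB : ∀ x, |v x| ≤ B) (hv : IsSlowlyDecreasing v) (he : Integrable e)
    (he0 : Tendsto e atTop (𝓝 0)) :
    Tendsto v atTop (𝓝 ((∫ x, e x) / ∫ s, s ∂F)) := by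
  obtain ⟨N, hN⟩ := exists_Ici_subset_closure_Ioo ha hab
  refine h.tendsto_integral_div_mean hF0 hmean (hF.mean_pos ha hab hF0 hmean).ne' hB he he0
    ⟨N, hN.trans ?_⟩ ⟨N, hN.trans ?_⟩
  · exact AddSubmonoid.closure_mono fun s hs => hv.isAdmissibleShift hF hs
  · exact AddSubmonoid.closure_mono fun s hs => hv.isAdmissibleShift_neg hF hs

/-! ### Exponential tilts -/

section ExpTilt

variable {v : ℝ → ℝ} {l : ℝ}

theorem le_exp_mul_of_monotone_exp_mul (hmono : Monotone fun t => exp (l * t) * v t) {x y : ℝ}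
    (hxy : x ≤ y) : v x ≤ exp (l * (y - x)) * v y := by
  refine le_of_mul_le_mul_left ((hmono hxy).trans_eq ?_) (exp_pos (l * x))
  rw [← mul_assoc, ← exp_add, mul_sub, add_sub_cancel]

theorem isSlowlyDecreasing_of_monotone_exp_mul (hmono : Monotone fun t => exp (l * t) * v t)
    {B : ℝ} (hB : ∀ x, |v x| ≤ B) : IsSlowlyDecreasing v := fun ε hε => by
  have hcont : ContinuousAt (fun d => |exp (l * d) - 1| * B) 0 := by fun_prop
  have hsmall : ∀ᶠ d in 𝓝 (0 : ℝ), |exp (l * d) - 1| * B < ε :=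
    hcont.eventually (gt_mem_nhds (by simpa using hε))
  obtain ⟨δ, hδ, hball⟩ := Metric.eventually_nhds_iff.1 hsmall
  refine ⟨δ / 2, half_pos hδ, fun x y hxy hyx => ?_⟩
  have hdist : dist (y - x) 0 < δ := by
    rw [dist_zero_right, norm_of_nonneg (sub_nonneg.2 hxy)]
    linarith
  calc v x ≤ exp (l * (y - x)) * v y := le_exp_mul_of_monotone_exp_mul hmono hxy
    _ = v y + (exp (l * (y - x)) - 1) * v y := by ring
    _ ≤ v y + |exp (l * (y - x)) - 1| * |v y| := by
        rw [← abs_mul]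
        exact add_le_add_right (le_abs_self _) _
    _ ≤ v y + |exp (l * (y - x)) - 1| * B := by gcongr; exact hB y
    _ ≤ v y + ε := by gcongr; exact (hball hdist).le

theorem mul_le_intervalIntegral_of_monotone_exp_mul (hl : 0 ≤ l) (hv0 : ∀ x, 0 ≤ v x)
    (hmono : Monotone fun t => exp (l * t) * v t) (hv : ∀ a b, IntervalIntegrable v volume a b)
    {c s : ℝ} (hc : 0 ≤ c) (hcs : c ≤ s) (x : ℝ) :
    c * exp (-l * c) * v x ≤ ∫ y in (x + c - s)..(x + c), v y := by
  have hlower : ∀ y ∈ Icc x (x + c), exp (-l * c) * v x ≤ v y := fun y hy => by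
    calc exp (-l * c) * v x ≤ exp (-l * c) * (exp (l * (y - x)) * v y) := by
          gcongr
          exact le_exp_mul_of_monotone_exp_mul hmono hy.1
      _ = exp (-(l * (x + c - y))) * v y := by
          rw [← mul_assoc, ← exp_add]
          congr 2
          ring
      _ ≤ v y := mul_le_of_le_one_left (hv0 y)
          (exp_le_one_iff.2 (neg_nonpos.2 (mul_nonneg hl (sub_nonneg.2 hy.2))))
  calc c * exp (-l * c) * v x = ∫ _ in x..(x + c), exp (-l * c) * v x := by
        rw [intervalIntegral.integral_const, smul_eq_mul, add_sub_cancel_left, mul_assoc]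
    _ ≤ ∫ y in x..(x + c), v y :=
        intervalIntegral.integral_mono_on (le_add_of_nonneg_right hc) intervalIntegrable_const
          (hv _ _) hlower
    _ ≤ ∫ y in (x + c - s)..(x + c), v y :=
        intervalIntegral.integral_mono_interval (by linarith) (le_add_of_nonneg_right hc) le_rfl
          (ae_of_all _ hv0) (hv _ _)

namespace IsRenewalSolution

variable {F : Measure ℝ} [IsProbabilityMeasure F] {e : ℝ → ℝ}

/- In the integrated equation at `x + c`, every window `(x + c - s, x + c)` with `s ≥ c` contains
`(x, x + c)`, on which `v` is at least `exp (-l * c) * v x`. -/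
theorem exists_forall_abs_le_of_monotone_exp_mul (h : IsRenewalSolution F e v)
    (hF0 : ∀ᵐ s ∂F, 0 ≤ s) {c : ℝ} (hc : 0 < c) (hFc : F (Ici c) ≠ 0) (hl : 0 ≤ l)
    (hv0 : ∀ x, 0 ≤ v x) (hmono : Monotone fun t => exp (l * t) * v t) (he : Integrable e) :
    ∃ B, ∀ x, |v x| ≤ B := by
  have hFc_pos : 0 < F.real (Ici c) := ENNReal.toReal_pos hFc (measure_ne_top _ _)
  have hv : ∀ a b, IntervalIntegrable v volume a b := fun a b =>
    ⟨(h.integrableOn_Iic b).mono_set Ioc_subset_Iic_self,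
      (h.integrableOn_Iic a).mono_set Ioc_subset_Iic_self⟩
  refine ⟨(∫ y, ‖e y‖) / (c * exp (-l * c) * F.real (Ici c)), fun x => ?_⟩
  rw [abs_of_nonneg (hv0 x), le_div_iff₀ (by positivity)]
  set K := c * exp (-l * c) * v x
  have hK : 0 ≤ K := mul_nonneg (by positivity) (hv0 x)
  have hwindow : Ici c ⊆ {s | K ≤ ∫ y in (x + c - s)..(x + c), v y} := fun s hs =>
    mul_le_intervalIntegral_of_monotone_exp_mul hl hv0 hmono hv hc.le hs x
  calc v x * (c * exp (-l * c) * F.real (Ici c)) = K * F.real (Ici c) := by ring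
    _ ≤ K * F.real {s | K ≤ ∫ y in (x + c - s)..(x + c), v y} :=
        mul_le_mul_of_nonneg_left (measureReal_mono hwindow) hK
    _ ≤ ∫ s, (∫ y in (x + c - s)..(x + c), v y) ∂F :=
        mul_meas_ge_le_integral_of_nonneg
          (hF0.mono fun s hs =>
            intervalIntegral.integral_nonneg (sub_le_self _ hs) fun y _ => hv0 y)
          (h.integrable_intervalIntegral hF0 (x + c)) K
    _ = ∫ y in Iic (x + c), e y := h.integral_intervalIntegral hF0 (x + c)
    _ ≤ ∫ y in Iic (x + c), ‖e y‖ :=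
        integral_mono he.integrableOn he.norm.integrableOn fun y => le_norm_self (e y)
    _ ≤ ∫ y, ‖e y‖ := setIntegral_le_integral he.norm (ae_of_all _ fun _ => norm_nonneg _)

theorem tendsto_of_monotone_exp_mul (h : IsRenewalSolution F e v) (hF0 : ∀ᵐ s ∂F, 0 ≤ s)
    (hmean : Integrable id F) {a b : ℝ} (ha : 0 < a) (hab : a < b)
    (hF : ChargesSubintervals F a b) (hl : 0 ≤ l) (hv0 : ∀ x, 0 ≤ v x)
    (hmono : Monotone fun t => exp (l * t) * v t) (he : Integrable e)
    (he0 : Tendsto e atTop (𝓝 0)) :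
    Tendsto v atTop (𝓝 ((∫ x, e x) / ∫ s, s ∂F)) := by
  have hFa : 0 < F (Ici a) :=
    (hF a b le_rfl hab le_rfl).trans_le (measure_mono fun s hs => hs.1.le)
  obtain ⟨B, hB⟩ := h.exists_forall_abs_le_of_monotone_exp_mul hF0 ha hFa.ne' hl hv0 hmono he
  exact h.tendsto_of_isSlowlyDecreasing hF0 hmean ha.le hab hF hB
    (isSlowlyDecreasing_of_monotone_exp_mul hmono hB) he he0

end IsRenewalSolution

end ExpTilt

/-- The exponential tilt `exp (-l * s) * k s ds` of a kernel `k` on `(0, ∞)`; at the Malthusian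
parameter `l` it is the law of the jumps of a renewal process. -/
noncomputable def tiltedLaw (k : ℝ → ℝ) (l : ℝ) : Measure ℝ :=
  (volume.restrict (Ioi 0)).withDensity fun s => ENNReal.ofReal (exp (-l * s) * k s)

section TiltedLaw

variable {k : ℝ → ℝ} {l : ℝ}

theorem ae_nonneg_tiltedLaw (k : ℝ → ℝ) (l : ℝ) : ∀ᵐ s ∂(tiltedLaw k l), 0 ≤ s :=
  (withDensity_absolutelyContinuous _ _).ae_le
    ((ae_restrict_mem measurableSet_Ioi).mono fun _ hs => le_of_lt hs)

theorem ae_nonneg_exp_mul (hk0 : ∀ s, 0 < s → 0 ≤ k s) (l : ℝ) :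
    ∀ᵐ s ∂(volume.restrict (Ioi 0)), 0 ≤ exp (-l * s) * k s :=
  (ae_restrict_mem measurableSet_Ioi).mono fun s hs => mul_nonneg (exp_pos _).le (hk0 s hs)

theorem aemeasurable_ofReal_exp_mul (hk : AEMeasurable k (volume.restrict (Ioi 0))) (l : ℝ) :
    AEMeasurable (fun s => ENNReal.ofReal (exp (-l * s) * k s)) (volume.restrict (Ioi 0)) :=
  ((by fun_prop : Measurable fun s => exp (-l * s)).aemeasurable.mul hk).ennreal_ofReal

theorem isProbabilityMeasure_tiltedLaw (hk0 : ∀ s, 0 < s → 0 ≤ k s)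
    (hroot : ∫ s in Ioi (0 : ℝ), exp (-l * s) * k s = 1) :
    IsProbabilityMeasure (tiltedLaw k l) := by
  have hint : IntegrableOn (fun s => exp (-l * s) * k s) (Ioi 0) :=
    .of_integral_ne_zero (hroot.trans_ne one_ne_zero)
  refine ⟨?_⟩
  rw [tiltedLaw, withDensity_apply _ MeasurableSet.univ, Measure.restrict_univ,
    ← ofReal_integral_eq_lintegral_ofReal hint (ae_nonneg_exp_mul hk0 l), hroot, ENNReal.ofReal_one]

theorem integral_tiltedLaw (hk : AEMeasurable k (volume.restrict (Ioi 0)))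
    (hk0 : ∀ s, 0 < s → 0 ≤ k s) (g : ℝ → ℝ) :
    ∫ s, g s ∂(tiltedLaw k l) = ∫ s in Ioi 0, exp (-l * s) * k s * g s := by
  rw [tiltedLaw, integral_withDensity_eq_integral_toReal_smul₀ (aemeasurable_ofReal_exp_mul hk l)
    (ae_of_all _ fun _ => ENNReal.ofReal_lt_top)]
  refine integral_congr_ae ((ae_nonneg_exp_mul hk0 l).mono fun s hs => ?_)
  simp only [ENNReal.toReal_ofReal hs, smul_eq_mul]

theorem integrable_tiltedLaw_iff (hk : AEMeasurable k (volume.restrict (Ioi 0)))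
    (hk0 : ∀ s, 0 < s → 0 ≤ k s) {g : ℝ → ℝ} :
    Integrable g (tiltedLaw k l) ↔ IntegrableOn (fun s => exp (-l * s) * k s * g s) (Ioi 0) := by
  rw [tiltedLaw, integrable_withDensity_iff_integrable_smul₀' (aemeasurable_ofReal_exp_mul hk l)
    (ae_of_all _ fun _ => ENNReal.ofReal_lt_top)]
  refine integrable_congr ((ae_nonneg_exp_mul hk0 l).mono fun s hs => ?_)
  simp only [ENNReal.toReal_ofReal hs, smul_eq_mul]

theorem chargesSubintervals_tiltedLaw (hk : AEMeasurable k (volume.restrict (Ioi 0)))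
    {a b : ℝ} (ha : 0 ≤ a) (hpos : ∀ s ∈ Ioo a b, 0 < k s) :
    ChargesSubintervals (tiltedLaw k l) a b := fun c d hac hcd hdb => by
  rw [pos_iff_ne_zero, tiltedLaw, Ne, withDensity_apply_eq_zero' (aemeasurable_ofReal_exp_mul hk l),
    inter_eq_right.2 fun s hs => ?_, Measure.restrict_apply measurableSet_Ioo,
    inter_eq_left.2 fun s hs => ?_, Real.volume_Ioo]
  · exact (ENNReal.ofReal_pos.2 (sub_pos.2 hcd)).ne'
  · exact (ha.trans hac).trans_lt hs.1
  · exact (ENNReal.ofReal_pos.2 (mul_pos (exp_pos _)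
      (hpos s ⟨hac.trans_lt hs.1, hs.2.trans_le hdb⟩))).ne'

theorem exists_chargesSubintervals_tiltedLaw (hk : ContinuousOn k (Ioi 0))
    (hk0 : ∀ s, 0 < s → 0 ≤ k s) (hroot : ∫ s in Ioi (0 : ℝ), exp (-l * s) * k s ≠ 0) :
    ∃ a b, 0 < a ∧ a < b ∧ ChargesSubintervals (tiltedLaw k l) a b := by
  obtain ⟨a, ha, hka⟩ : ∃ a, 0 < a ∧ 0 < k a := by
    by_contra! hk_nonpos
    refine hroot (setIntegral_eq_zero_of_forall_eq_zero fun s hs => ?_)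
    rw [(hk_nonpos s hs).antisymm (hk0 s hs), mul_zero]
  have hnhds : ∀ᶠ s in 𝓝 a, 0 < k s :=
    (hk.continuousAt (Ioi_mem_nhds ha)).eventually (lt_mem_nhds hka)
  obtain ⟨_, b, hab, hsub⟩ := mem_nhds_iff_exists_Ioo_subset.1 hnhds
  exact ⟨a, b, ha, hab.2, chargesSubintervals_tiltedLaw (hk.aemeasurable measurableSet_Ioi)
    ha.le fun s hs => hsub ⟨hab.1.trans hs.1, hs.2⟩⟩

end TiltedLaw

theorem monotone_indicator_Ici {f : ℝ → ℝ} {a : ℝ} (hf : MonotoneOn f (Ici a))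
    (hfa : 0 ≤ f a) : Monotone ((Ici a).indicator f) := fun x y hxy => by
  by_cases hx : x ∈ Ici a
  · have hy : y ∈ Ici a := hx.trans hxy
    rw [indicator_of_mem hx, indicator_of_mem hy]
    exact hf hx hy hxy
  · rw [indicator_of_notMem hx]
    exact indicator_nonneg (fun z hz => hfa.trans (hf self_mem_Ici hz hz)) y

section TiltedSolution

variable {k z Z : ℝ → ℝ} {l : ℝ}

theorem integral_exp_mul_indicator_tiltedLaw (hk : AEMeasurable k (volume.restrict (Ioi 0)))
    (hk0 : ∀ s, 0 < s → 0 ≤ k s) (t : ℝ) :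
    ∫ s, exp (-l * (t - s)) * (Ici 0).indicator Z (t - s) ∂(tiltedLaw k l) =
      exp (-l * t) * ∫ s in Ioc 0 t, Z (t - s) * k s := by
  rw [integral_tiltedLaw hk hk0, ← integral_const_mul, ← Ioi_inter_Iic,
    ← setIntegral_indicator measurableSet_Iic]
  refine setIntegral_congr_fun measurableSet_Ioi fun s _ => ?_
  have hexp : exp (-l * t) = exp (-l * s) * exp (-l * (t - s)) := by
    rw [← exp_add, mul_sub, add_sub_cancel]
  by_cases hst : s ≤ t
  · simp only [indicator_of_mem (mem_Ici.2 (sub_nonneg.2 hst)), indicator_of_mem (mem_Iic.2 hst),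
      hexp]
    ring
  · simp only [indicator_of_notMem (notMem_Ici.2 (sub_neg.2 (not_le.1 hst))),
      indicator_of_notMem (mt mem_Iic.1 hst), mul_zero]

theorem isRenewalSolution_tiltedLaw (hk : AEMeasurable k (volume.restrict (Ioi 0)))
    (hk0 : ∀ s, 0 < s → 0 ≤ k s) (hZ : MonotoneOn Z (Ici 0)) (hZ0 : 0 ≤ Z 0)
    (hren : ∀ t, 0 ≤ t → Z t = z t + ∫ s in (0 : ℝ)..t, Z (t - s) * k s) :
    IsRenewalSolution (tiltedLaw k l) (fun t => exp (-l * t) * (Ici 0).indicator z t)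
      (fun t => exp (-l * t) * (Ici 0).indicator Z t) where
  measurable := by
    have := (monotone_indicator_Ici hZ hZ0).measurable
    fun_prop
  integrableOn_Iic t := by
    simp only [← indicator_mul_right _ fun x => exp (-l * x)]
    rw [IntegrableOn, integrable_indicator_iff measurableSet_Ici, IntegrableOn,
      Measure.restrict_restrict measurableSet_Ici, Ici_inter_Iic]
    exact ((hZ.mono Icc_subset_Ici_self).integrableOn_isCompact isCompact_Icc).continuousOn_mul
      (by fun_prop) isCompact_Icc
  eq_add_integral t := by
    rw [integral_exp_mul_indicator_tiltedLaw hk hk0, ← mul_add]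
    congr 1
    rcases le_or_gt 0 t with ht | ht
    · rw [indicator_of_mem (mem_Ici.2 ht), indicator_of_mem (mem_Ici.2 ht), hren t ht,
        intervalIntegral.integral_of_le ht]
    · rw [indicator_of_notMem (notMem_Ici.2 ht), indicator_of_notMem (notMem_Ici.2 ht),
        Ioc_eq_empty ht.not_gt, setIntegral_empty, add_zero]

end TiltedSolution

theorem integrable_exp_neg_mul_indicator_one {l : ℝ} (hl : 0 < l) :
    Integrable fun t => exp (-l * t) * (Ici (0 : ℝ)).indicator (fun _ => (1 : ℝ)) t := by
  simp only [← indicator_mul_right _ fun x => exp (-l * x), mul_one]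
  rw [integrable_indicator_iff measurableSet_Ici, integrableOn_Ici_iff_integrableOn_Ioi]
  exact integrableOn_exp_mul_Ioi (neg_lt_zero.2 hl) 0

theorem integral_exp_neg_mul_indicator_one {l : ℝ} (hl : 0 < l) :
    ∫ t, exp (-l * t) * (Ici (0 : ℝ)).indicator (fun _ => (1 : ℝ)) t = 1 / l := by
  simp only [← indicator_mul_right _ fun x => exp (-l * x), mul_one]
  rw [integral_indicator measurableSet_Ici, integral_Ici_eq_integral_Ioi,
    integral_exp_mul_Ioi (neg_lt_zero.2 hl), mul_zero, exp_zero, neg_div_neg_eq]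

theorem eventuallyEq_exp_mul_indicator_Ici (Z : ℝ → ℝ) (l : ℝ) :
    (fun t => exp (-l * t) * (Ici 0).indicator Z t) =ᶠ[atTop] fun t => exp (-l * t) * Z t :=
  (eventually_ge_atTop 0).mono fun t ht => by
    simp only [indicator_of_mem (mem_Ici.2 ht)]

theorem tendsto_exp_neg_mul_indicator_one {l : ℝ} (hl : 0 < l) :
    Tendsto (fun t => exp (-l * t) * (Ici (0 : ℝ)).indicator (fun _ => (1 : ℝ)) t) atTop (𝓝 0) := by
  refine Tendsto.congr' (eventuallyEq_exp_mul_indicator_Ici _ l).symm ?_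
  simp only [mul_one]
  exact tendsto_exp_atBot.comp (tendsto_id.const_mul_atTop_of_neg (neg_lt_zero.2 hl))

theorem tendsto_exp_neg_mul_of_renewal {k Z : ℝ → ℝ} {l : ℝ} (hk : ContinuousOn k (Ioi 0))
    (hk0 : ∀ s, 0 < s → 0 ≤ k s) (hl : 0 < l) (hroot : ∫ s in Ioi (0 : ℝ), exp (-l * s) * k s = 1)
    (hmean : IntegrableOn (fun s => s * exp (-l * s) * k s) (Ioi 0))
    (hZ : MonotoneOn Z (Ici 0))
    (hren : ∀ t, 0 ≤ t → Z t = 1 + ∫ s in (0 : ℝ)..t, Z (t - s) * k s) :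
    Tendsto (fun t => exp (-l * t) * Z t) atTop
      (𝓝 (1 / (l * ∫ s in Ioi 0, s * exp (-l * s) * k s))) := by
  have hkm := hk.aemeasurable (μ := volume) measurableSet_Ioi
  have hprob := isProbabilityMeasure_tiltedLaw hk0 hroot
  obtain ⟨a, b, ha, hab, hF⟩ :=
    exists_chargesSubintervals_tiltedLaw hk hk0 (hroot.trans_ne one_ne_zero)
  have hweight : ∀ s, exp (-l * s) * k s * s = s * exp (-l * s) * k s := fun s => by ring
  have hmean_int : Integrable id (tiltedLaw k l) :=
    (integrable_tiltedLaw_iff hkm hk0).2 (by simpa only [id_eq, hweight] using hmean)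
  have hmean_eq : ∫ s, s ∂(tiltedLaw k l) = ∫ s in Ioi 0, s * exp (-l * s) * k s := by
    simp only [integral_tiltedLaw hkm hk0, hweight]
  have hZ0 : 0 ≤ Z 0 := by simp [hren 0 le_rfl]
  have hmono := monotone_indicator_Ici hZ hZ0
  have hnonneg : ∀ t, 0 ≤ (Ici 0).indicator Z t :=
    indicator_nonneg fun t ht => hZ0.trans (hZ self_mem_Ici ht ht)
  have hsol := isRenewalSolution_tiltedLaw (l := l) hkm hk0 hZ hZ0 hren
  have hlim := hsol.tendsto_of_monotone_exp_mul (ae_nonneg_tiltedLaw k l) hmean_int ha hab hF hl.le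
    (fun t => mul_nonneg (exp_pos _).le (hnonneg t))
    (by simpa only [← mul_assoc, ← exp_add, neg_mul, add_neg_cancel, exp_zero, one_mul] using hmono)
    (integrable_exp_neg_mul_indicator_one hl) (tendsto_exp_neg_mul_indicator_one hl)
  rw [integral_exp_neg_mul_indicator_one hl, hmean_eq, div_div] at hlim
  exact hlim.congr' (eventuallyEq_exp_mul_indicator_Ici Z l)

theorem integrableOn_mul_exp_neg_mul {p : ℝ → ℝ} {l : ℝ} (hl : 0 < l)
    (hpm : AEStronglyMeasurable p (volume.restrict (Ioi 0)))
    {B : ℝ} (hp : ∀ s, 0 < s → |p s| ≤ B) :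
    IntegrableOn (fun s => s * exp (-l * s) * p s) (Ioi 0) := by
  have hweight : IntegrableOn (fun s : ℝ => s * exp (-l * s)) (Ioi 0) := by
    simpa only [rpow_one] using
      integrableOn_rpow_mul_exp_neg_mul_rpow (s := 1) (p := 1) (by norm_num) one_pos hl
  exact Integrable.mul_bdd hweight hpm ((ae_restrict_mem measurableSet_Ioi).mono hp)

theorem renewal_supercritical_asymptotics_general
    (p : ℝ → ℝ) (hpc : ContinuousOn p (Ioi 0)) (hp0 : ∀ s, 0 < s → 0 ≤ p s)
    (γ : ℝ) (hγ : 0 < γ) (l : ℝ) (hl : 0 < l)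
    (hroot : ∫ s in Ioi (0 : ℝ), exp (-l * s) * p s = 1 / γ)
    (hmean : IntegrableOn (fun s => s * exp (-l * s) * p s) (Ioi 0))
    (Z : ℝ → ℝ) (hZmono : MonotoneOn Z (Ici 0))
    (hren : ∀ t : ℝ, 0 ≤ t → Z t = 1 + γ * ∫ s in (0 : ℝ)..t, Z (t - s) * p s) :
    Tendsto (fun t => exp (-l * t) * Z t) atTop
      (𝓝 (1 / (l * γ * ∫ s in Ioi (0 : ℝ), s * exp (-l * s) * p s))) := by
  have hlim := tendsto_exp_neg_mul_of_renewal (k := fun s => γ * p s) (l := l) (Z := Z)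
    (continuousOn_const.mul hpc) (fun s hs => mul_nonneg hγ.le (hp0 s hs)) hl
    (by simp only [mul_left_comm _ γ, integral_const_mul, hroot, mul_one_div_cancel hγ.ne'])
    (by simpa only [IntegrableOn, mul_left_comm _ γ] using hmean.const_mul γ) hZmono
    (by simpa only [mul_left_comm _ γ, intervalIntegral.integral_const_mul] using hren)
  simpa only [mul_left_comm _ γ, integral_const_mul, mul_assoc] using hlim

/-- Supercritical case of Theorem 1(1): for `γ > 1/G_∞` (i.e. `γ > 0`, `1/γ < G_∞`) and
`λ = p̂⁻¹(1/γ) > 0`, a nondecreasing solution `Z ≥ 1` of the renewal equation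
`Z(t) = 1 + γ ∫₀^t Z(t-s) p(s) ds` satisfies
`e^{-λt} Z(t) → 1/(λ γ ∫₀^∞ s e^{-λs} p(s) ds)`. -/
theorem renewal_supercritical_asymptotics
    (p : ℝ → ℝ) (hpc : Continuous p) (hp0 : p 0 = 1)
    (hp01 : ∀ s, 0 ≤ s → 0 ≤ p s ∧ p s ≤ 1)
    (γ : ℝ) (hγ : 0 < γ)
    (hγG : ENNReal.ofReal (1 / γ) < ∫⁻ s in Set.Ioi (0:ℝ), ENNReal.ofReal (p s))
    (l : ℝ) (hl : 0 < l)
    (hroot : ∫ s in Set.Ioi (0:ℝ), Real.exp (-l * s) * p s = 1 / γ)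
    (Z : ℝ → ℝ)
    (hZ1 : ∀ t, 0 ≤ t → 1 ≤ Z t)
    (hZmono : MonotoneOn Z (Set.Ici 0))
    (hren : ∀ t : ℝ, 0 ≤ t → Z t = 1 + γ * ∫ s in (0:ℝ)..t, Z (t - s) * p s) :
    Tendsto (fun t => Real.exp (-l * t) * Z t) atTop
      (nhds (1 / (l * γ * ∫ s in Set.Ioi (0:ℝ), s * Real.exp (-l * s) * p s))) :=
  renewal_supercritical_asymptotics_general p hpc.continuousOn (fun s hs => (hp01 s hs.le).1) γ hγ l
    hl hroot (integrableOn_mul_exp_neg_mul hl hpc.aestronglyMeasurable fun s hs =>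
      (abs_of_nonneg (hp01 s hs.le).1).trans_le (hp01 s hs.le).2) Z hZmono hren
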